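/- Let G = S_n with n a positive integer, n ≠ 6, and let r be the ramification with r_C = 1 for every conjugacy class C of G. Then the number N(G, r) of isomorphism classes of ramification systems with characters of G with ramification r equals ∏_{C ∈ K(G)} γ_C, the product over all conjugacy classes C of G, where for C of cycle type 1^{λ_1} 2^{λ_2} ⋯ n^{λ_n}, γ_C := (∏_{i : λ_i = 1} i) · (∏_{i : λ_i ≥ 2} 2i). -/

import Mathlib

/-- A ramification system with characters `RSC(G, r, χ⃗, u)` on a group `G`:
a ramification `r` assigning a nonnegative integer `r C` to each conjugacy class `C`
of `G`; a map `u` from conjugacy classes to `G` with `u C ∈ C`; and, for each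
conjugacy class `C`, an `r C`-tuple of characters of the centralizer `Z_{u C}`
(one-dimensional representations, i.e. group homomorphisms `Z_{u C} → ℂˣ`).
For classes with `r C = 0` the tuple of characters is empty, so `χ` carries
information exactly for the classes in `K_r(G) = {C : r C ≠ 0}`. -/
structure RSC (G : Type*) [Group G] where
  /-- the ramification -/
  r : ConjClasses G → ℕ
  /-- a choice of representative of each conjugacy class -/
  u : ConjClasses G → G
  hu : ∀ C : ConjClasses G, ConjClasses.mk (u C) = C
  /-- the tuple of characters of `Z_{u C}` attached to each conjugacy class `C` -/
  chi : ∀ C : ConjClasses G, Fin (r C) →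
    (Subgroup.centralizer ({u C} : Set G) →* ℂˣ)

/-- Isomorphism of ramification systems with characters (over the same group `G`),
following the definition of the paper: `RSC(G, r, χ⃗, u) ≅ RSC(G, r', χ⃗', u')` if there
are a group automorphism `φ` of `G`, for each conjugacy class `C` an element `h_C ∈ G`
with `φ(h_C u(C) h_C⁻¹) = u'(φ(C))`, and for each `C ∈ K_r(G)` a bijection
`φ_C : I_C(r) ≃ I_{φ(C)}(r')` such that
`χ'_{φ(C)}^{(φ_C(i))}(φ(h_C h h_C⁻¹)) = χ_C^{(i)}(h)` for all `h ∈ Z_{u(C)}` and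
all `i`. -/
def RSC.Iso {G : Type*} [Group G] (A B : RSC G) : Prop :=
  ∃ φ : G ≃* G,
    ∀ C : ConjClasses G, ∃ h : G,
      φ (h * A.u C * h⁻¹) = B.u (ConjClasses.map (φ : G →* G) C) ∧
      (A.r C ≠ 0 →
        ∃ e : Fin (A.r C) ≃ Fin (B.r (ConjClasses.map (φ : G →* G) C)),
          ∀ (i : Fin (A.r C)) (x : G)
            (hx : x ∈ Subgroup.centralizer ({A.u C} : Set G))
            (hx' : φ (h * x * h⁻¹) ∈
              Subgroup.centralizer ({B.u (ConjClasses.map (φ : G →* G) C)} : Set G)),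
            B.chi (ConjClasses.map (φ : G →* G) C) (e i) ⟨φ (h * x * h⁻¹), hx'⟩ =
              A.chi C i ⟨x, hx⟩)

/-- `lamOf g i` is the number `λ_i` of cycles of length `i` in the disjoint cycle
decomposition of the permutation `g`, fixed points counted as cycles of length `1`,
so that `g` has cycle type `1^{λ_1} 2^{λ_2} ⋯ n^{λ_n}`. -/
def lamOf {n : ℕ} (g : Equiv.Perm (Fin n)) (i : ℕ) : ℕ :=
  if i = 1 then (Finset.univ.filter fun x : Fin n => g x = x).card
  else Multiset.count i g.cycleType

/-!
When every automorphism of `G` is inner, automorphisms fix all conjugacy classes, and characters of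
`Z_{u(C)}` can be transported unambiguously to the centralizer of a fixed representative of `C`,
because inner automorphisms of a centralizer fix its characters. Hence, for `r = 1`, isomorphism
classes correspond to families of characters, one for each class.

For `n ≠ 6` every automorphism of `S_n` is inner: comparing orders of centralizers, it maps
transpositions to transpositions. The images of the transpositions `(o i)` pairwise do not commute
and contain no triangle, so they move a common point `p`; thus `(o i) ↦ (p s(i))` for a
permutation `s`, and the automorphism is conjugation by `s`.

The centralizer of `g` is the semidirect product of the group preserving each cycle, which is
generated by the cycles and the permutations of the fixed points, with the group `∏ S_{λ_i}` of
permutations of the cycles of each length `i ≥ 2`. A character takes a common value, an `i`-th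
root of unity, at all cycles of length `i`, and restricts to the trivial or the sign character on
each symmetric group; so length `i` contributes `i` choices if `λ_i = 1` and `2i` if `λ_i ≥ 2`.
-/

open Equiv Equiv.Perm Equiv.Perm.OnCycleFactors

section GroupHoms

variable {A : Type*} [CommGroup A]

/-- Homomorphisms from a direct product of two groups to a commutative group. -/
def prodHomEquiv (M N : Type*) [Group M] [Group N] :
    (M × N →* A) ≃ (M →* A) × (N →* A) where
  toFun f := (f.comp (.inl M N), f.comp (.inr M N))
  invFun p := p.1.coprod p.2
  left_inv := MonoidHom.coprod_unique
  right_inv _ := Prod.ext (MonoidHom.coprod_comp_inl ..) (MonoidHom.coprod_comp_inr ..)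

/-- Homomorphisms from a finite direct product of groups to a commutative group. -/
def piHomEquiv {ι : Type*} [Fintype ι] [DecidableEq ι] (N : ι → Type*) [∀ i, Group (N i)] :
    ((∀ i, N i) →* A) ≃ ∀ i, N i →* A :=
  MonoidHom.noncommPiCoprodEquiv.symm.trans
    (Equiv.subtypeUnivEquiv fun _ _ _ _ _ _ ↦ Commute.all _ _)

/-- Homomorphisms from the cyclic group generated by `g`, parametrized by the image of `g`. -/
noncomputable def cyclicHomEquiv {G : Type*} [Group G] (g : G)
    (hg : ∀ x, x ∈ Subgroup.zpowers g) : (G →* A) ≃ {a : A // a ^ orderOf g = 1} where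
  toFun f := ⟨f g, by rw [← map_pow, pow_orderOf_eq_one, map_one]⟩
  invFun a := monoidHomOfForallMemZpowers hg (orderOf_dvd_of_pow_eq_one a.2)
  left_inv f := (MonoidHom.eq_iff_eq_on_generator hg _ f).2
    (monoidHomOfForallMemZpowers_apply_gen hg _)
  right_inv a := Subtype.ext (monoidHomOfForallMemZpowers_apply_gen hg _)

/-- A homomorphism from `N ⋊[φ] G` to a commutative group is a pair of homomorphisms, the one on
`N` being invariant under the action of `G`. -/
def semidirectProductHomEquiv {N G : Type*} [Group N] [Group G] (φ : G →* MulAut N) :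
    (N ⋊[φ] G →* A) ≃
      {ψ : N →* A // ∀ x, ψ.comp (φ x).toMonoidHom = ψ} × (G →* A) where
  toFun f := (⟨f.comp SemidirectProduct.inl, fun x ↦ by
    ext n
    simp [SemidirectProduct.inl_aut]⟩, f.comp SemidirectProduct.inr)
  invFun p := SemidirectProduct.lift p.1.1 p.2 fun x ↦ by
    rw [p.1.2 x]
    ext n
    simp
  left_inv f := (SemidirectProduct.lift_unique f).symm
  right_inv _ := Prod.ext (Subtype.ext (SemidirectProduct.lift_comp_inl ..))
    (SemidirectProduct.lift_comp_inr ..)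

end GroupHoms

section PermHoms

variable {α : Type*} [Fintype α] [DecidableEq α] {A : Type*} [CommGroup A]

theorem alternatingGroup_le_ker (χ : Perm α →* A) : alternatingGroup α ≤ χ.ker := by
  rw [← closure_three_cycles_eq_alternating, Subgroup.closure_le]
  intro f (hf : f.IsThreeCycle)
  have hconj : IsConj (f * f) f := by
    rw [isConj_iff_cycleType_eq, hf.isThreeCycle_sq.cycleType, hf.cycleType]
  have hχ : χ f * χ f = χ f := by
    rw [← map_mul]
    exact isConj_iff_eq.1 (χ.map_isConj hconj)
  exact mul_eq_left.1 hχ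

/-- On at least two points, every homomorphism from the symmetric group to a commutative group
factors uniquely through the sign. -/
noncomputable def permHomEquiv (α A : Type*) [Fintype α] [DecidableEq α] [Nontrivial α]
    [CommGroup A] : (Perm α →* A) ≃ {a : A // a ^ 2 = 1} :=
  calc (Perm α →* A)
    _ ≃ {χ : Perm α →* A // sign.ker ≤ χ.ker} :=
      (Equiv.subtypeUnivEquiv alternatingGroup_le_ker).symm
    _ ≃ (ℤˣ →* A) := sign.liftOfSurjective (sign_surjective α)
    _ ≃ {a : A // a ^ orderOf (-1 : ℤˣ) = 1} := cyclicHomEquiv (-1) fun x ↦ by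
      rcases Int.units_eq_one_or x with rfl | rfl
      · exact one_mem _
      · exact Subgroup.mem_zpowers _
    _ ≃ {a : A // a ^ 2 = 1} := Equiv.subtypeEquivRight fun a ↦ by
      rw [orderOf_eq_prime (p := 2) (by simp) (by decide)]

end PermHoms

section PermCentralizer

variable {α : Type*} [Fintype α] [DecidableEq α] {g : Perm α} {A : Type*} [CommGroup A]

/-- The subgroup of permutations preserving each cycle of `g`, parametrized by a permutation of the
fixed points and a power of each cycle. -/
abbrev CycleStabilizer (g : Perm α) : Type _ :=
  Perm (Function.fixedPoints g) × ∀ c : g.cycleFactorsFinset, Subgroup.zpowers c.val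

/-- The centralizer of `g` as an extension, by the permutations preserving each cycle of `g`, of the
group of length-preserving permutations of the cycles. -/
def centralizerExtension (g : Perm α) :
    GroupExtension (CycleStabilizer g) (Subgroup.centralizer {g}) (range_toPermHom' g) where
  inl := (kerParam g).codRestrict _ fun n ↦
    kerParam_range_le_centralizer (MonoidHom.mem_range.2 ⟨n, rfl⟩)
  rightHom := (toPermHom g).codRestrict _ fun k ↦
    mem_range_toPermHom'_iff.2 (mem_range_toPermHom_iff.1 (MonoidHom.mem_range.2 ⟨k, rfl⟩))
  inl_injective := (MonoidHom.injective_codRestrict ..).2 (kerParam_injective g)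
  range_inl_eq_ker_rightHom := by
    refine Subgroup.map_injective (Subgroup.subtype_injective _) ?_
    rw [MonoidHom.ker_codRestrict, ← kerParam_range_eq, MonoidHom.map_range]
    rfl
  rightHom_surjective τ := by
    obtain ⟨k, hk⟩ := mem_range_toPermHom_iff.2 τ.2
    exact ⟨k, Subtype.ext hk⟩

/-- The splitting of `centralizerExtension g` determined by a base point in each cycle. -/
noncomputable def centralizerSplitting (a : Basis g) : (centralizerExtension g).Splitting where
  __ := a.toCentralizer
  rightInverse_rightHom τ := Subtype.ext (a.toPermHom_apply_toCentralizer τ)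

/-- The element of `CycleStabilizer g` acting as the cycle `c` on its support, and trivially
elsewhere. -/
def CycleStabilizer.ofCycle (c : g.cycleFactorsFinset) : CycleStabilizer g :=
  (1, Pi.mulSingle c ⟨c, Subgroup.mem_zpowers _⟩)

theorem centralizerExtension_inl_ofSubtype (σ : Perm (Function.fixedPoints g)) :
    ((centralizerExtension g).inl (σ, 1) : Perm α) = ofSubtype σ := by
  change kerParam g (σ, 1) = _
  rw [kerParam, MonoidHom.noncommCoprod_apply, map_one, mul_one]

theorem centralizerExtension_inl_ofCycle (c : g.cycleFactorsFinset) :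
    ((centralizerExtension g).inl (.ofCycle c) : Perm α) = c := by
  change kerParam g (1, _) = _
  rw [kerParam, MonoidHom.noncommCoprod_apply, map_one, one_mul]
  exact MonoidHom.noncommPiCoprod_mulSingle ..

theorem centralizerSplitting_conjAct_ofSubtype (a : Basis g) (τ : range_toPermHom' g)
    (σ : Perm (Function.fixedPoints g)) :
    (centralizerSplitting a).conjAct τ (σ, 1) = (σ, 1) := by
  refine (centralizerExtension g).inl_injective (Subtype.ext ?_)
  have hcomm : Commute (a.ofPermHom τ) (ofSubtype σ) := by
    refine (disjoint_iff_disjoint_support.2 ?_).commute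
    rw [Basis.ofPermHom_support, Finset.disjoint_biUnion_left]
    exact fun c _ ↦ ((ofSubtype_support_disjoint σ).mono_right
      (mem_cycleFactorsFinset_support_le c.2)).symm
  calc ((centralizerExtension g).inl ((centralizerSplitting a).conjAct τ (σ, 1)) : Perm α)
    _ = a.ofPermHom τ * ofSubtype σ * (a.ofPermHom τ)⁻¹ := by
      rw [← centralizerExtension_inl_ofSubtype]
      exact congrArg Subtype.val (centralizerExtension g).inl_conjAct_comm
    _ = ofSubtype σ := by rw [hcomm.eq, mul_inv_cancel_right]
    _ = _ := (centralizerExtension_inl_ofSubtype σ).symm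

theorem centralizerSplitting_conjAct_ofCycle (a : Basis g) (τ : range_toPermHom' g)
    (c : g.cycleFactorsFinset) :
    (centralizerSplitting a).conjAct τ (.ofCycle c) = .ofCycle (τ.1 c) := by
  refine (centralizerExtension g).inl_injective (Subtype.ext ?_)
  calc ((centralizerExtension g).inl ((centralizerSplitting a).conjAct τ (.ofCycle c)) : Perm α)
    _ = a.ofPermHom τ * c * (a.ofPermHom τ)⁻¹ := by
      rw [← centralizerExtension_inl_ofCycle c]
      exact congrArg Subtype.val (centralizerExtension g).inl_conjAct_comm
    _ = τ.1 c := congrArg Subtype.val (a.toCentralizer_equivariant c τ)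
    _ = _ := (centralizerExtension_inl_ofCycle _).symm

theorem mem_zpowers_mk_self {G : Type*} [Group G] (g : G) (x : Subgroup.zpowers g) :
    x ∈ Subgroup.zpowers (⟨g, Subgroup.mem_zpowers g⟩ : Subgroup.zpowers g) := by
  obtain ⟨k, hk⟩ := Subgroup.mem_zpowers_iff.1 x.2
  exact Subgroup.mem_zpowers_iff.2 ⟨k, Subtype.ext hk⟩

/-- The length of a cycle of `g`, as an element of the set of cycle lengths of `g`. -/
def cycleLength (g : Perm α) (c : g.cycleFactorsFinset) : g.cycleType.toFinset :=
  ⟨c.1.support.card, Multiset.mem_toFinset.2 (Multiset.mem_map_of_mem _ c.2)⟩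

theorem cycleLength_surjective (g : Perm α) : Function.Surjective (cycleLength g) := by
  rintro ⟨i, hi⟩
  obtain ⟨c, hc, rfl⟩ := Multiset.mem_map.1 (Multiset.mem_toFinset.1 hi)
  exact ⟨⟨c, hc⟩, rfl⟩

theorem orderOf_cycle (c : g.cycleFactorsFinset) :
    orderOf (⟨c, Subgroup.mem_zpowers _⟩ : Subgroup.zpowers c.val) = cycleLength g c := by
  rw [Subgroup.orderOf_mk, (mem_cycleFactorsFinset_iff.1 c.2).1.orderOf]
  rfl

/-- A homomorphism from `CycleStabilizer g` to a commutative group amounts to its values at the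
cycles and a homomorphism from the symmetric group on the fixed points. -/
noncomputable def cycleStabilizerHomEquiv (g : Perm α) (A : Type*) [CommGroup A] :
    (CycleStabilizer g →* A) ≃
      (∀ c, {a : A // a ^ (cycleLength g c : ℕ) = 1}) × (Perm (Function.fixedPoints g) →* A) :=
  (prodHomEquiv _ _).trans <| (Equiv.prodComm _ _).trans <| .prodCongr
    ((piHomEquiv _).trans <| .piCongrRight fun c ↦
      (cyclicHomEquiv _ (mem_zpowers_mk_self c.1)).trans <|
        .subtypeEquivRight fun a ↦ by rw [orderOf_cycle])
    (.refl _)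

theorem cycleStabilizerHomEquiv_fst (ψ : CycleStabilizer g →* A) (c : g.cycleFactorsFinset) :
    ((cycleStabilizerHomEquiv g A ψ).1 c : A) = ψ (.ofCycle c) := rfl

theorem swap_mem_range_toPermHom' {c d : g.cycleFactorsFinset}
    (h : cycleLength g c = cycleLength g d) : swap c d ∈ range_toPermHom' g := by
  intro e
  refine congrArg Subtype.val (?_ : cycleLength g (swap c d e) = cycleLength g e)
  rw [swap_apply_def]
  split_ifs with hc hd
  · rw [hc, h]
  · rw [hd, h]
  · rfl

theorem comp_conjAct_eq_self_iff (a : Basis g) (ψ : CycleStabilizer g →* A) :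
    (∀ τ, ψ.comp ((centralizerSplitting a).conjAct τ).toMonoidHom = ψ) ↔
      ∀ c d, cycleLength g c = cycleLength g d →
        ((cycleStabilizerHomEquiv g A ψ).1 c : A) = (cycleStabilizerHomEquiv g A ψ).1 d := by
  simp only [cycleStabilizerHomEquiv_fst]
  refine ⟨fun h c d hcd ↦ ?_, fun h τ ↦ (cycleStabilizerHomEquiv g A).injective ?_⟩
  · have := DFunLike.congr_fun (h ⟨swap c d, swap_mem_range_toPermHom' hcd⟩) (.ofCycle c)
    rw [← this]
    refine congrArg ψ (.trans (centralizerSplitting_conjAct_ofCycle ..) ?_)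
    rw [swap_apply_left]
  · refine Prod.ext ?_ ?_
    · ext c
      rw [cycleStabilizerHomEquiv_fst, cycleStabilizerHomEquiv_fst, ← h _ _ (Subtype.ext (τ.2 c))]
      exact congrArg ψ (centralizerSplitting_conjAct_ofCycle a τ c)
    · ext σ
      exact congrArg ψ (centralizerSplitting_conjAct_ofSubtype a τ σ)

/-- Families that are constant along the fibres of a surjection `f`, as families indexed by its
codomain. -/
noncomputable def fiberwiseConstantEquiv {ι κ A : Type*} {f : ι → κ} (hf : Function.Surjective f)
    (P : κ → A → Prop) :
    {ζ : ∀ c, {a // P (f c) a} // ∀ c d, f c = f d → (ζ c : A) = ζ d} ≃ ∀ k, {a // P k a} where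
  toFun ζ k := ⟨ζ.1 (Function.surjInv hf k), by
    simpa only [Function.surjInv_eq] using (ζ.1 (Function.surjInv hf k)).2⟩
  invFun ξ := ⟨fun c ↦ ξ (f c), fun c d h ↦ congrArg (fun k ↦ (ξ k : A)) h⟩
  left_inv ζ := by
    ext c
    exact ζ.2 _ _ (Function.surjInv_eq hf _)
  right_inv ξ := by
    ext k
    exact congrArg (fun k ↦ (ξ k : A)) (Function.surjInv_eq hf k)

/-- Length-preserving permutations of the cycles of `g` permute independently the cycles of each
length. -/
def lengthPreservingEquiv (g : Perm α) :
    range_toPermHom' g ≃* ∀ i, Perm {c // cycleLength g c = i} :=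
  MulEquiv.trans
    { toFun τ := .op ⟨DomMulAct.mk τ.1, funext fun c ↦ Subtype.ext (τ.2 c)⟩
      invFun τ := ⟨DomMulAct.mk.symm τ.unop.1, fun c ↦
        congrArg Subtype.val
          (congrFun (DomMulAct.mem_stabilizer_iff.1 τ.unop.2 : cycleLength g ∘ _ = _) c)⟩
      map_mul' _ _ := rfl }
    (DomMulAct.stabilizerMulEquiv (cycleLength g))

/-- Homomorphisms from the centralizer of `g` to a commutative group. Cycles of
the same length are conjugate in the centralizer, so there is one value per cycle length. -/
noncomputable def centralizerHomEquiv (g : Perm α) (A : Type*) [CommGroup A] :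
    (Subgroup.centralizer {g} →* A) ≃
      ((∀ i : g.cycleType.toFinset, {a : A // a ^ i.1 = 1}) ×
        (Perm (Function.fixedPoints g) →* A)) × ∀ i, Perm {c // cycleLength g c = i} →* A :=
  let a := (Basis.nonempty g).some
  calc (Subgroup.centralizer {g} →* A)
    _ ≃ (CycleStabilizer g ⋊[(centralizerSplitting a).conjAct] range_toPermHom' g →* A) :=
      (centralizerSplitting a).semidirectProductMulEquiv.symm.monoidHomCongrLeftEquiv
    _ ≃ {ψ : CycleStabilizer g →* A //
          ∀ τ, ψ.comp ((centralizerSplitting a).conjAct τ).toMonoidHom = ψ} ×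
          (range_toPermHom' g →* A) := semidirectProductHomEquiv _
    _ ≃ {p : (∀ c, {a : A // a ^ (cycleLength g c : ℕ) = 1}) ×
            (Perm (Function.fixedPoints g) →* A) //
          ∀ c d, cycleLength g c = cycleLength g d → (p.1 c : A) = p.1 d} ×
          ∀ i, Perm {c // cycleLength g c = i} →* A :=
      .prodCongr ((cycleStabilizerHomEquiv g A).subtypeEquiv (comp_conjAct_eq_self_iff a))
        ((lengthPreservingEquiv g).monoidHomCongrLeftEquiv.trans (piHomEquiv _))
    _ ≃ _ := .prodCongr (Equiv.prodSubtypeFstEquivSubtypeProd.trans <|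
        .prodCongr (fiberwiseConstantEquiv (cycleLength_surjective g) fun i a ↦ a ^ i.1 = 1)
          (.refl _)) (.refl _)

end PermCentralizer

section CharacterCount

variable {α : Type*} [Fintype α] [DecidableEq α]

theorem card_units_complex_pow_eq_one {n : ℕ} (hn : n ≠ 0) :
    Nat.card {ζ : ℂˣ // ζ ^ n = 1} = n :=
  have : NeZero n := ⟨hn⟩
  Complex.card_rootsOfUnity n

theorem card_perm_characters (α : Type*) [Finite α] :
    Nat.card (Perm α →* ℂˣ) = if 2 ≤ Nat.card α then 2 else 1 := by
  classical
  have := Fintype.ofFinite α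
  split_ifs with h
  · have := Finite.one_lt_card_iff_nontrivial.1 h
    rw [Nat.card_congr (permHomEquiv α ℂˣ), card_units_complex_pow_eq_one two_ne_zero]
  · have := Finite.card_le_one_iff_subsingleton.1 (Nat.le_of_lt_succ (not_le.1 h))
    exact Nat.card_unique

theorem card_centralizer_characters (g : Perm α) :
    Nat.card (Subgroup.centralizer {g} →* ℂˣ) =
      (if 2 ≤ Nat.card (Function.fixedPoints g) then 2 else 1) *
        ∏ i ∈ g.cycleType.toFinset, i * if 2 ≤ g.cycleType.count i then 2 else 1 := by
  have hroots (i : g.cycleType.toFinset) : Nat.card {ζ : ℂˣ // ζ ^ i.1 = 1} = i :=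
    card_units_complex_pow_eq_one
      (zero_lt_two.trans_le (two_le_of_mem_cycleType (Multiset.mem_toFinset.1 i.2))).ne'
  have hcount (i : g.cycleType.toFinset) :
      Nat.card {c // cycleLength g c = i} = g.cycleType.count i.1 := by
    rw [CycleType.count_def, Nat.card_eq_fintype_card]
    exact Fintype.card_congr (.subtypeEquivRight fun c ↦ Subtype.ext_iff)
  rw [Nat.card_congr (centralizerHomEquiv g ℂˣ), Nat.card_prod, Nat.card_prod, Nat.card_pi,
    Nat.card_pi, card_perm_characters, mul_right_comm, mul_comm, ← Finset.prod_mul_distrib,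
    ← Finset.prod_coe_sort g.cycleType.toFinset]
  simp only [hroots, card_perm_characters, hcount]

theorem lamOf_one {n : ℕ} (g : Perm (Fin n)) : lamOf g 1 = Nat.card (Function.fixedPoints g) := by
  rw [lamOf, if_pos rfl, ← Fintype.card_subtype, Nat.card_eq_fintype_card]
  rfl

theorem lamOf_of_ne_one {n : ℕ} (g : Perm (Fin n)) {i : ℕ} (hi : i ≠ 1) :
    lamOf g i = g.cycleType.count i :=
  if_neg hi

theorem prod_filter_lamOf {n : ℕ} (hn : 0 < n) (g : Perm (Fin n)) :
    (∏ i ∈ Finset.range (n + 1) with lamOf g i = 1, i) *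
        ∏ i ∈ Finset.range (n + 1) with 2 ≤ lamOf g i, 2 * i =
      (if 2 ≤ Nat.card (Function.fixedPoints g) then 2 else 1) *
        ∏ i ∈ g.cycleType.toFinset, i * if 2 ≤ g.cycleType.count i then 2 else 1 := by
  let w (i : ℕ) : ℕ := (if lamOf g i = 1 then i else 1) * if 2 ≤ lamOf g i then 2 * i else 1
  have one_notMem : 1 ∉ g.cycleType.toFinset := fun h ↦
    absurd (two_le_of_mem_cycleType (Multiset.mem_toFinset.1 h)) (by norm_num)
  have hsub : insert 1 g.cycleType.toFinset ⊆ Finset.range (n + 1) := by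
    refine Finset.insert_subset (Finset.mem_range.2 (by lia)) fun i hi ↦ ?_
    have := le_card_support_of_mem_cycleType (Multiset.mem_toFinset.1 hi)
    have := g.support.card_le_univ
    rw [Fintype.card_fin] at this
    exact Finset.mem_range.2 (by lia)
  have hzero (i) (hi : i ∉ insert 1 g.cycleType.toFinset) : w i = 1 := by
    rw [Finset.mem_insert, not_or, Multiset.mem_toFinset] at hi
    simp [w, lamOf_of_ne_one g hi.1, Multiset.count_eq_zero_of_notMem hi.2]
  have hone : w 1 = if 2 ≤ Nat.card (Function.fixedPoints g) then 2 else 1 := by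
    simp [w, lamOf_one]
  have hcycle (i) (hi : i ∈ g.cycleType.toFinset) :
      w i = i * if 2 ≤ g.cycleType.count i then 2 else 1 := by
    have hpos := Multiset.count_pos.2 (Multiset.mem_toFinset.1 hi)
    simp only [w, lamOf_of_ne_one g (ne_of_mem_of_not_mem hi one_notMem)]
    split_ifs <;> lia
  rw [Finset.prod_filter, Finset.prod_filter, ← Finset.prod_mul_distrib,
    ← Finset.prod_subset hsub fun i _ hi ↦ hzero i hi, Finset.prod_insert one_notMem, hone,
    Finset.prod_congr rfl hcycle]

end CharacterCount

section CentralizerCongr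

variable {G H M : Type*} [Group G] [Group H] [CommGroup M]

/-- The isomorphism between the centralizers of `u` and of its image `v` induced by a group
isomorphism. -/
def centralizerCongr (e : G ≃* H) {u : G} {v : H} (huv : e u = v) :
    Subgroup.centralizer {u} ≃* Subgroup.centralizer {v} where
  toEquiv := e.toEquiv.subtypeEquiv fun x ↦ by
    rw [Subgroup.mem_centralizer_singleton_iff, Subgroup.mem_centralizer_singleton_iff, ← huv]
    exact (commute_map_iff e.injective).symm
  map_mul' _ _ := Subtype.ext (map_mul e _ _)

@[simp]
theorem coe_centralizerCongr (e : G ≃* H) {u : G} {v : H} (huv : e u = v)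
    (x : Subgroup.centralizer {u}) : (centralizerCongr e huv x : H) = e x :=
  rfl

/-- Two elements conjugating `u` to `v` differ by an element of the centralizer of `v`, and inner
automorphisms of that centralizer fix its homomorphisms to a commutative group. -/
theorem comp_centralizerCongr_conj_eq {u v : G} (χ : Subgroup.centralizer {v} →* M) {h k : G}
    (hh : MulAut.conj h u = v) (hk : MulAut.conj k u = v) :
    χ.comp (centralizerCongr (MulAut.conj h) hh).toMonoidHom =
      χ.comp (centralizerCongr (MulAut.conj k) hk).toMonoidHom := by
  have hz : h * k⁻¹ ∈ Subgroup.centralizer {v} := by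
    rw [Subgroup.mem_centralizer_singleton_iff]
    nth_rewrite 1 [← hk]
    rw [← hh, MulAut.conj_apply, MulAut.conj_apply]
    group
  ext x : 1
  have hconj : centralizerCongr (MulAut.conj h) hh x =
      MulAut.conj ⟨h * k⁻¹, hz⟩ (centralizerCongr (MulAut.conj k) hk x) := by
    ext
    simp only [coe_centralizerCongr, MulAut.conj_apply, Subgroup.coe_mul, Subgroup.coe_inv]
    group
  rw [MonoidHom.comp_apply, MonoidHom.comp_apply, MulEquiv.coe_toMonoidHom,
    MulEquiv.coe_toMonoidHom, hconj, MulAut.conj_apply, map_mul, map_mul, map_inv,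
    mul_inv_cancel_comm]

end CentralizerCongr

section Transpositions

theorem two_pow_mul_factorial_succ_lt_of_pos {k : ℕ} (hk : 0 < k) :
    2 ^ k * (k + 1).factorial < (2 * k + 1).factorial :=
  calc 2 ^ k * (k + 1).factorial
    _ < (k + 2) ^ k * (k + 1).factorial := by gcongr; lia
    _ ≤ (2 * k + 1).factorial := by
      rw [mul_comm, two_mul, add_right_comm]
      exact Nat.factorial_mul_pow_le_factorial

theorem two_pow_mul_factorial_succ_ne {k : ℕ} (h0 : k ≠ 0) (h2 : k ≠ 2) :
    2 ^ k * (k + 1).factorial ≠ (2 * k).factorial := by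
  match k with
  | 1 => decide
  | j + 3 =>
    refine ne_of_lt ?_
    calc 2 ^ (j + 3) * (j + 4).factorial
      _ < (2 ^ 2) ^ (j + 2) * (j + 4).factorial := by
        rw [← pow_mul]
        gcongr <;> lia
      _ ≤ (j + 4 + 1) ^ (j + 2) * (j + 4).factorial := by gcongr; lia
      _ ≤ (2 * (j + 3)).factorial := by
        rw [mul_comm, show 2 * (j + 3) = j + 4 + (j + 2) by ring]
        exact Nat.factorial_mul_pow_le_factorial

theorem eq_zero_of_factorial_eq {m k : ℕ} (h6 : m + 2 * k + 2 ≠ 6)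
    (h : m.factorial * (2 ^ k * (k + 1).factorial) = (m + 2 * k).factorial) : k = 0 := by
  have hasc : 2 ^ k * (k + 1).factorial = (m + 1).ascFactorial (2 * k) :=
    Nat.eq_of_mul_eq_mul_left m.factorial_pos (h.trans (Nat.factorial_mul_ascFactorial ..).symm)
  by_contra hk
  rcases m.eq_zero_or_pos with rfl | hm
  · rw [zero_add, Nat.one_ascFactorial] at hasc
    exact two_pow_mul_factorial_succ_ne hk (by lia) hasc
  · have hmono : (1 + 1).ascFactorial (2 * k) ≤ (m + 1).ascFactorial (2 * k) :=
      Nat.ascFactorial_le _ (by lia)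
    have hone := Nat.factorial_mul_ascFactorial 1 (2 * k)
    rw [Nat.factorial_one, one_mul, add_comm 1 (2 * k)] at hone
    rw [hone, ← hasc] at hmono
    exact (two_pow_mul_factorial_succ_lt_of_pos (Nat.pos_of_ne_zero hk)).not_ge hmono

variable {α : Type*} [Fintype α] [DecidableEq α]

theorem isSwap_of_card_centralizer_eq (h6 : Fintype.card α ≠ 6) {σ τ : Perm α} (hτ : τ.IsSwap)
    (hσ : orderOf σ = 2) (hc : Nat.card (Subgroup.centralizer {σ}) =
      Nat.card (Subgroup.centralizer {τ})) : σ.IsSwap := by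
  obtain ⟨k, hk⟩ := cycleType_prime_order (σ := σ) (hσ ▸ Nat.prime_two)
  rw [hσ] at hk
  have hτc : τ.cycleType = {2} := by
    rw [hτ.isCycle.cycleType, card_support_eq_two.2 hτ]
  obtain ⟨m, hm⟩ : ∃ m, Fintype.card α = m + 2 * k + 2 := by
    have := σ.sum_cycleType_le
    rw [hk, Multiset.sum_replicate, smul_eq_mul] at this
    exact ⟨Fintype.card α - (2 * k + 2), by lia⟩
  rw [nat_card_centralizer, nat_card_centralizer, hk, hτc, hm] at hc
  simp only [Multiset.sum_replicate, smul_eq_mul, Multiset.prod_replicate,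
    Multiset.toFinset_replicate, Multiset.sum_singleton, Multiset.prod_singleton,
    Multiset.toFinset_singleton, Finset.prod_singleton, if_neg k.succ_ne_zero,
    Multiset.count_replicate_self, Multiset.count_singleton_self, Nat.factorial_one,
    show m + 2 * k + 2 - (k + 1) * 2 = m by lia, Nat.add_sub_cancel] at hc
  obtain rfl : k = 0 := eq_zero_of_factorial_eq (hm ▸ h6) (by
    rw [pow_succ] at hc
    linarith)
  rw [← card_support_eq_two, ← sum_cycleType, hk]
  rfl

variable {β : Type*} [DecidableEq β]

theorem eq_swap_of_apply_ne {τ : Perm β} (hτ : τ.IsSwap) {p : β} (hp : τ p ≠ p) :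
    τ = swap p (τ p) := by
  obtain ⟨a, b, -, rfl⟩ := hτ
  rcases eq_or_eq_of_swap_apply_ne_self hp with rfl | rfl
  · rw [swap_apply_left]
  · rw [swap_apply_right, swap_comm]

theorem apply_ne_of_not_commute_swap {ρ : Perm β} {p a : β} (hp : ρ p = p)
    (h : ¬Commute ρ (swap p a)) : ρ a ≠ a := fun ha ↦
  h ((mul_swap_eq_swap_mul ρ p a).trans (by rw [hp, ha]))

/-- Three pairwise non-commuting transpositions form either a star or a triangle; in a triangle each
of them is conjugate to another one by the third. -/
theorem apply_ne_of_pairwise_not_commute {ρ σ τ : Perm β} (hρ : ρ.IsSwap) (hσ : σ.IsSwap)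
    (hτ : τ.IsSwap) (hστ : ¬Commute σ τ) (hρσ : ¬Commute ρ σ) (hρτ : ¬Commute ρ τ)
    (htri : ρ ≠ σ * τ * σ) {p : β} (hσp : σ p ≠ p) (hτp : τ p ≠ p) : ρ p ≠ p := by
  intro hρp
  obtain ⟨a, ha⟩ : ∃ a, σ = swap p a := ⟨_, eq_swap_of_apply_ne hσ hσp⟩
  obtain ⟨b, hb⟩ : ∃ b, τ = swap p b := ⟨_, eq_swap_of_apply_ne hτ hτp⟩
  subst ha hb
  have hρa : ρ a ≠ a := apply_ne_of_not_commute_swap hρp hρσ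
  have hρb : ρ b ≠ b := apply_ne_of_not_commute_swap hρp hρτ
  have hab : a ≠ b := by
    rintro rfl
    exact hστ (Commute.refl _)
  have hpb : p ≠ b := fun h ↦ hτp (by rw [h, swap_self, refl_apply])
  have hρ_eq : ρ = swap a (ρ a) := eq_swap_of_apply_ne hρ hρa
  have hρab : ρ a = b := by
    rw [hρ_eq] at hρb
    exact ((eq_or_eq_of_swap_apply_ne_self hρb).resolve_left hab.symm).symm
  rw [hρab] at hρ_eq
  refine htri ?_
  rw [hρ_eq, swap_comm p b, swap_mul_swap_mul_swap hpb.symm hab.symm]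

theorem exists_forall_apply_ne {ι : Type*} [Nonempty β] {τ : ι → Perm β}
    (hswap : ∀ i, (τ i).IsSwap) (hcomm : Pairwise fun i j ↦ ¬Commute (τ i) (τ j))
    (htri : ∀ i j k, i ≠ j → τ k ≠ τ i * τ j * τ i) : ∃ p, ∀ i, τ i p ≠ p := by
  rcases subsingleton_or_nontrivial ι with hι | hι
  · rcases isEmpty_or_nonempty ι with hι' | ⟨⟨i⟩⟩
    · exact ⟨Classical.arbitrary β, isEmptyElim⟩
    · obtain ⟨a, b, hab, hi⟩ := hswap i
      exact ⟨a, fun j ↦ by rw [Subsingleton.elim j i, hi, swap_apply_left]; exact hab.symm⟩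
  · obtain ⟨i, j, hij⟩ := exists_pair_ne ι
    obtain ⟨p, hip, hjp⟩ : ∃ p, τ i p ≠ p ∧ τ j p ≠ p := by
      by_contra! h
      exact hcomm hij (Disjoint.commute fun p ↦ or_iff_not_imp_left.2 (h p))
    refine ⟨p, fun k ↦ ?_⟩
    by_cases hki : k = i
    · rwa [hki]
    by_cases hkj : k = j
    · rwa [hkj]
    exact apply_ne_of_pairwise_not_commute (hswap k) (hswap i) (hswap j) (hcomm hij) (hcomm hki)
      (hcomm hkj) (htri i j k hij) hip hjp

theorem monoidHom_ext_swap [Finite β] {M : Type*} [Monoid M] (o : β) {f g : Perm β →* M}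
    (h : ∀ i, f (swap o i) = g (swap o i)) : f = g := by
  refine MonoidHom.eq_of_eqOn_dense closure_isSwap ?_
  rintro _ ⟨a, b, -, rfl⟩
  exact SubmonoidClass.swap_mem_trans (f.eqLocusM g) (swap_comm o a ▸ h a) (h b)

theorem not_commute_swap_of_ne {o i j : β} (hi : i ≠ o) (hj : j ≠ o) (hij : i ≠ j) :
    ¬Commute (swap o i) (swap o j) := fun h ↦ hj <| .symm <| by
  simpa [swap_apply_of_ne_of_ne, *] using DFunLike.congr_fun h.eq i

theorem exists_forall_map_swap_apply_ne {φ : Perm β ≃* Perm β}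
    (hφ : ∀ τ, τ.IsSwap → (φ τ).IsSwap) (o : β) : ∃ p, ∀ i, i ≠ o → φ (swap o i) p ≠ p := by
  have : Nonempty β := ⟨o⟩
  obtain ⟨p, hp⟩ := exists_forall_apply_ne (τ := fun i : {i // i ≠ o} ↦ φ (swap o i))
    (fun i ↦ hφ _ ⟨o, i, i.2.symm, rfl⟩)
    (fun i j hij h ↦ not_commute_swap_of_ne i.2 j.2 (Subtype.coe_ne_coe.2 hij)
      (h.of_map φ.injective))
    (fun i j k hij h ↦ by
      rw [← map_mul, ← map_mul] at h
      have hne : (i : β) ≠ j := Subtype.coe_ne_coe.2 hij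
      have := DFunLike.congr_fun (φ.injective h) o
      simp [swap_apply_of_ne_of_ne i.2 hne, k.2] at this)
  exact ⟨p, fun i hi ↦ hp ⟨i, hi⟩⟩

theorem exists_eq_conj_of_map_isSwap [Finite β] {φ : MulAut (Perm β)}
    (hφ : ∀ τ, τ.IsSwap → (φ τ).IsSwap) : ∃ s, φ = MulAut.conj s := by
  rcases isEmpty_or_nonempty β with hβ | ⟨⟨o⟩⟩
  · exact ⟨1, MulEquiv.ext fun _ ↦ Subsingleton.elim _ _⟩
  obtain ⟨p, hp⟩ := exists_forall_map_swap_apply_ne hφ o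
  have himage (i : β) : φ (swap o i) = swap p (φ (swap o i) p) := by
    rcases eq_or_ne i o with rfl | hi
    · simp [swap_self, ← Equiv.Perm.one_def]
    · exact eq_swap_of_apply_ne (hφ _ ⟨o, i, hi.symm, rfl⟩) (hp i hi)
  have hinj : Function.Injective fun i ↦ φ (swap o i) p := fun i j hij ↦ by
    have hij' : φ (swap o i) = φ (swap o j) := by rw [himage i, himage j]; exact congrArg _ hij
    simpa using DFunLike.congr_fun (φ.injective hij') o
  let s : Perm β := .ofBijective _ (Finite.injective_iff_bijective.1 hinj)
  have hso : s o = p := by simp [s, swap_self, ← Equiv.Perm.one_def]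
  refine ⟨s, MulEquiv.toMonoidHom_injective (monoidHom_ext_swap o fun i ↦ ?_)⟩
  calc φ (swap o i)
    _ = swap (s o) (s i) := by rw [hso]; exact himage i
    _ = s * swap o i * s⁻¹ := swap_apply_apply s o i

theorem perm_mulAut_eq_conj {γ : Type*} [Fintype γ] (h6 : Fintype.card γ ≠ 6)
    (φ : MulAut (Perm γ)) : ∃ s, φ = MulAut.conj s := by
  classical
  refine exists_eq_conj_of_map_isSwap fun τ hτ ↦ isSwap_of_card_centralizer_eq h6 hτ ?_ ?_
  · rw [MulEquiv.orderOf_eq, hτ.orderOf]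
  · exact Nat.card_congr (centralizerCongr φ rfl).symm.toEquiv

end Transpositions

theorem conjClasses_map_conj {G : Type*} [Group G] (s : G) (C : ConjClasses G) :
    ConjClasses.map (MulAut.conj s : G →* G) C = C := by
  obtain ⟨a, rfl⟩ := C.exists_rep
  exact ConjClasses.mk_eq_mk_iff_isConj.2 (isConj_iff.2 ⟨s, rfl⟩).symm

namespace RSC

variable {G : Type*} [Group G]

theorem exists_conj_out_eq (A : RSC G) (C : ConjClasses G) :
    ∃ h, MulAut.conj h C.out = A.u C :=
  isConj_iff.1 <| ConjClasses.mk_eq_mk_iff_isConj.1 <| C.out_eq.trans (A.hu C).symm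

/-- The `i`-th character attached to the class `C`, transported to the centralizer of the fixed
representative `C.out`; this makes characters of different ramification systems comparable. -/
noncomputable def outChar (A : RSC G) (C : ConjClasses G) (i : Fin (A.r C)) :
    Subgroup.centralizer {C.out} →* ℂˣ :=
  (A.chi C i).comp (centralizerCongr _ (A.exists_conj_out_eq C).choose_spec).toMonoidHom

theorem outChar_eq (A : RSC G) {C : ConjClasses G} (i : Fin (A.r C)) {h : G}
    (hh : MulAut.conj h C.out = A.u C) :
    A.outChar C i = (A.chi C i).comp (centralizerCongr (MulAut.conj h) hh).toMonoidHom :=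
  comp_centralizerCongr_conj_eq _ _ hh

theorem outChar_eq_outChar_iff {A B : RSC G} {C : ConjClasses G} {i : Fin (A.r C)}
    {j : Fin (B.r C)} {h : G} (hh : MulAut.conj h (A.u C) = B.u C) :
    B.outChar C j = A.outChar C i ↔
      (B.chi C j).comp (centralizerCongr (MulAut.conj h) hh).toMonoidHom = A.chi C i := by
  obtain ⟨k, hk⟩ := A.exists_conj_out_eq C
  have hhk : MulAut.conj (h * k) C.out = B.u C := by
    rw [map_mul, MulAut.mul_apply, hk, hh]
  have htrans : B.outChar C j =
      ((B.chi C j).comp (centralizerCongr (MulAut.conj h) hh).toMonoidHom).comp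
        (centralizerCongr (MulAut.conj k) hk).toMonoidHom := by
    rw [outChar_eq B j hhk]
    ext x : 1
    refine congrArg (B.chi C j) (Subtype.ext ?_)
    simp only [coe_centralizerCongr, map_mul, MulAut.mul_apply, MulEquiv.coe_toMonoidHom]
  rw [htrans, outChar_eq A i hk]
  exact MonoidHom.cancel_right (centralizerCongr (MulAut.conj k) hk).surjective

theorem iso_iff_outChar (hG : ∀ φ : MulAut G, ∃ s, φ = MulAut.conj s) {A B : RSC G} :
    Iso A B ↔ ∀ C, A.r C ≠ 0 →
      ∃ e : Fin (A.r C) ≃ Fin (B.r C), ∀ i, B.outChar C (e i) = A.outChar C i := by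
  constructor
  · rintro ⟨φ, hφ⟩ C hC
    obtain ⟨s, rfl⟩ := hG φ
    obtain ⟨h, hu, he⟩ := hφ C
    rw [conjClasses_map_conj] at hu he
    obtain ⟨e, he⟩ := he hC
    have hsh : MulAut.conj (s * h) (A.u C) = B.u C := by
      rw [← hu, map_mul, MulAut.mul_apply, MulAut.conj_apply h]
    refine ⟨e, fun i ↦ (outChar_eq_outChar_iff hsh).2 <| MonoidHom.ext fun x ↦ ?_⟩
    have hx : centralizerCongr (MulAut.conj (s * h)) hsh x = MulAut.conj s (h * x * h⁻¹) := by
      rw [coe_centralizerCongr, map_mul, MulAut.mul_apply, MulAut.conj_apply h]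
    rw [← he i x x.2 (hx ▸ Subtype.property _)]
    exact congrArg (B.chi C (e i)) (Subtype.ext hx)
  · intro hAB
    refine ⟨MulAut.conj 1, fun C ↦ ?_⟩
    obtain ⟨h, hh⟩ : ∃ h, MulAut.conj h (A.u C) = B.u C :=
      isConj_iff.1 <| ConjClasses.mk_eq_mk_iff_isConj.1 <| (A.hu C).trans (B.hu C).symm
    rw [conjClasses_map_conj]
    refine ⟨h, by simpa using hh, fun hC ↦ ?_⟩
    obtain ⟨e, he⟩ := hAB C hC
    refine ⟨e, fun i x hx hx' ↦ ?_⟩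
    rw [← (outChar_eq_outChar_iff hh).1 (he i)]
    refine congrArg (B.chi C (e i)) (Subtype.ext ?_)
    simp

/-- The ramification systems with characters of ramification `r = 1`. -/
abbrev RamificationOne (G : Type*) [Group G] := {A : RSC G // A.r = fun _ ↦ 1}

namespace RamificationOne

theorem r_eq (A : RamificationOne G) (C : ConjClasses G) : A.1.r C = 1 :=
  congrFun A.2 C

/-- The single character attached to `C` by a system of ramification one, as a character of the
centralizer of `C.out`. -/
noncomputable def outChar (A : RamificationOne G) (C : ConjClasses G) :
    Subgroup.centralizer {C.out} →* ℂˣ :=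
  A.1.outChar C ⟨0, by rw [A.r_eq C]; exact Nat.one_pos⟩

theorem outChar_eq (A : RamificationOne G) (C : ConjClasses G) (i : Fin (A.1.r C)) :
    A.1.outChar C i = A.outChar C := by
  have : Subsingleton (Fin (A.1.r C)) := by rw [A.r_eq C]; infer_instance
  exact congrArg _ (Subsingleton.elim ..)

theorem iso_iff (hG : ∀ φ : MulAut G, ∃ s, φ = MulAut.conj s)
    {A B : RamificationOne G} :
    Iso A.1 B.1 ↔ A.outChar = B.outChar := by
  rw [iso_iff_outChar hG, funext_iff]
  refine forall_congr' fun C ↦ ⟨fun h ↦ ?_, fun h _ ↦ ?_⟩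
  · obtain ⟨e, he⟩ := h (by rw [A.r_eq]; exact one_ne_zero)
    exact (he _).symm.trans (B.outChar_eq C _)
  · refine ⟨finCongr (by rw [A.r_eq, B.r_eq]), fun i ↦ ?_⟩
    rw [A.outChar_eq, B.outChar_eq, h]

theorem outChar_surjective :
    Function.Surjective (outChar : RamificationOne G → _) := by
  intro χ
  refine ⟨⟨⟨fun _ ↦ 1, Quotient.out, Quotient.out_eq, fun C _ ↦ χ C⟩, rfl⟩, funext fun C ↦ ?_⟩
  refine (RSC.outChar_eq _ _ (h := 1) (by simp)).trans (MonoidHom.ext fun x ↦ ?_)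
  refine congrArg (χ C) (Subtype.ext ?_)
  simp

/-- If all automorphisms of `G` are inner, then a ramification system with characters of
ramification one amounts, up to isomorphism, to one character for each conjugacy class. -/
noncomputable def isoClassesEquiv (hG : ∀ φ : MulAut G, ∃ s, φ = MulAut.conj s) :
    (Quot fun A B : RamificationOne G ↦ Iso A.1 B.1) ≃
      ∀ C : ConjClasses G, Subgroup.centralizer {C.out} →* ℂˣ :=
  (Quot.congrRight fun _ _ ↦ iso_iff hG).trans
    (Setoid.quotientKerEquivOfSurjective _ outChar_surjective)

end RamificationOne

end RSC

/-- Let `G = S_n` with `n` a positive integer, `n ≠ 6`, and let `r` be the ramification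
with `r_C = 1` for every conjugacy class `C`.  Then the number `N(G, r)` of isomorphism
classes of ramification systems with characters of `G` with ramification `r` equals
`∏_{C ∈ K(G)} γ_C`, the product over all conjugacy classes of `G`, where for a class
`C` of cycle type `1^{λ_1} 2^{λ_2} ⋯ n^{λ_n}` one sets
`γ_C = (∏_{i : λ_i = 1} i) · (∏_{i : λ_i ≥ 2} 2i)`. -/
theorem card_rsc_classes_ramification_one (n : ℕ) (hn : 0 < n) (h6 : n ≠ 6)
    (γ : ConjClasses (Equiv.Perm (Fin n)) → ℕ)
    (hγ : ∀ g : Equiv.Perm (Fin n),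
      γ (ConjClasses.mk g) =
        (∏ i ∈ (Finset.range (n + 1)).filter fun i => lamOf g i = 1, i) *
        (∏ i ∈ (Finset.range (n + 1)).filter fun i => 2 ≤ lamOf g i, 2 * i)) :
    Nat.card
        (Quot fun A B : {A : RSC (Equiv.Perm (Fin n)) //
            A.r = fun _ => 1} => RSC.Iso A.1 B.1) =
      ∏ C : ConjClasses (Equiv.Perm (Fin n)), γ C := by
  have hinner (φ : MulAut (Perm (Fin n))) : ∃ s, φ = MulAut.conj s :=
    perm_mulAut_eq_conj (by rwa [Fintype.card_fin]) φ
  calc _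
    _ = Nat.card (∀ C : ConjClasses (Perm (Fin n)), Subgroup.centralizer {C.out} →* ℂˣ) :=
      Nat.card_congr (RSC.RamificationOne.isoClassesEquiv hinner)
    _ = ∏ C : ConjClasses (Perm (Fin n)), Nat.card (Subgroup.centralizer {C.out} →* ℂˣ) :=
      Nat.card_pi
    _ = ∏ C, γ C := Finset.prod_congr rfl fun C _ ↦ by
      rw [card_centralizer_characters, ← prod_filter_lamOf hn, ← hγ]
      exact congrArg γ C.out_eq
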